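/- The maximum loss $M^{H,-}_t$ of standard fractional Brownian motion satisfies the logarithmic tail asymptotic $\lim_{x\to\infty} \frac{1}{x^2}\log P(M^{H,-}_t > x) = -\frac{1}{2t^{2H}}$. -/

import Mathlib

open MeasureTheory ProbabilityTheory Real Set Filter

/-- A (standard) fractional Brownian motion with Hurst parameter `H`:
a continuous centered Gaussian process started at `0` with the fBm covariance. -/
structure IsFBM {Ω : Type*} [MeasurableSpace Ω] (P : Measure Ω) (H : ℝ)
    (B : ℝ → Ω → ℝ) : Prop where
  measurable : ∀ t, Measurable (B t)
  gaussian : ∀ (n : ℕ) (t : Fin n → ℝ) (c : Fin n → ℝ),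
    ∃ v : NNReal, P.map (fun ω => ∑ i, c i * B (t i) ω) = gaussianReal 0 v
  zero : ∀ ω, B 0 ω = 0
  cov : ∀ s t : ℝ, 0 ≤ s → 0 ≤ t →
    ∫ ω, B s ω * B t ω ∂P = (s ^ (2*H) + t ^ (2*H) - |t - s| ^ (2*H)) / 2
  cont : ∀ ω, Continuous fun t => B t ω

/-- Running supremum `S_a = sup_{0 ≤ v ≤ a} B_v`. -/
noncomputable def fbmSup {Ω : Type*} (B : ℝ → Ω → ℝ) (a : ℝ) (ω : Ω) : ℝ :=
  sSup ((fun v => B v ω) '' Set.Icc 0 a)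

/-- Running infimum `I_a = inf_{0 ≤ v ≤ a} B_v`. -/
noncomputable def fbmInf {Ω : Type*} (B : ℝ → Ω → ℝ) (a : ℝ) (ω : Ω) : ℝ :=
  sInf ((fun v => B v ω) '' Set.Icc 0 a)

/-- Maximum loss `M_a = sup_{0 ≤ u ≤ v ≤ a} (B_u - B_v)`. -/
noncomputable def fbmMaxLoss {Ω : Type*} (B : ℝ → Ω → ℝ) (a : ℝ) (ω : Ω) : ℝ :=
  sSup {x | ∃ u v : ℝ, 0 ≤ u ∧ u ≤ v ∧ v ≤ a ∧ x = B u ω - B v ω}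

lemma fbm_incr {Ω : Type*} [MeasurableSpace Ω] {P : Measure Ω}
    [IsProbabilityMeasure P] {H : ℝ} {B : ℝ → Ω → ℝ}
    (hH : 0 < H) (hB : IsFBM P H B) {s u : ℝ} (hs : 0 ≤ s) (hu : 0 ≤ u) :
    ∃ v : NNReal, P.map (fun ω => B s ω - B u ω) = gaussianReal 0 v ∧
      (v : ℝ) = |u - s| ^ (2 * H) := by
  have hL : ∀ r, MemLp (B r) 2 P := by
    intro r
    obtain ⟨v, hv⟩ := hB.gaussian 1 (fun _ => r) (fun _ => 1)
    simp only [Finset.univ_unique, one_mul, Finset.sum_const, Finset.card_singleton,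
      one_smul] at hv
    have h1 : MemLp id 2 (P.map (fun ω => B r ω)) := by
      rw [hv]; exact memLp_id_gaussianReal' 2 (by simp)
    exact h1.comp_of_map (hB.measurable r).aemeasurable
  obtain ⟨v, hv⟩ := hB.gaussian 2 ![s, u] ![1, -1]
  have he : (fun ω => ∑ i, (![1, -1] : Fin 2 → ℝ) i * B ((![s, u] : Fin 2 → ℝ) i) ω)
      = fun ω => B s ω - B u ω := by
    funext ω
    simp [Fin.sum_univ_two]; ring
  rw [he] at hv
  refine ⟨v, hv, ?_⟩
  have hm : Measurable (fun ω => B s ω - B u ω) := (hB.measurable s).sub (hB.measurable u)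
  have hvar : (v : ℝ) = ∫ ω, (B s ω - B u ω) ^ 2 ∂P := by
    have h0 : ∫ x, x ^ 2 ∂(gaussianReal 0 v) = v := by
      rw [← variance_fun_id_gaussianReal (μ := 0) (v := v),
        variance_of_integral_eq_zero (by fun_prop) (by simp)]
    rw [← h0, ← hv, integral_map hm.aemeasurable (by fun_prop)]
  have hi : ∀ a b, Integrable (fun ω => B a ω * B b ω) P := fun a b =>
    (hL a).integrable_mul (hL b)
  have h2 : (fun ω => (B s ω - B u ω) ^ 2) =
      fun ω => (B s ω * B s ω + B u ω * B u ω) - 2 * (B s ω * B u ω) := by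
    funext ω; ring
  have hadd : Integrable (fun ω => B s ω * B s ω + B u ω * B u ω) P := (hi s s).add (hi u u)
  rw [hvar, h2, integral_sub hadd ((hi s u).const_mul 2),
    integral_add (hi s s) (hi u u), integral_const_mul, hB.cov s s hs hs, hB.cov u u hu hu,
    hB.cov s u hs hu]
  have : (0 : ℝ) ^ (2 * H) = 0 := Real.zero_rpow (by positivity)
  simp only [sub_self, abs_zero, this]
  ring

lemma gauss_tail {Ω : Type*} [MeasurableSpace Ω] {P : Measure Ω}
    [IsProbabilityMeasure P] {X : Ω → ℝ} (hX : Measurable X) {v : NNReal}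
    (h : P.map X = gaussianReal 0 v) {w : ℝ} (hvw : (v : ℝ) ≤ w) {a : ℝ} (ha : 0 ≤ a) :
    P {ω | a < X ω} ≤ ENNReal.ofReal (exp (-a ^ 2 / (2 * w))) := by
  have hw : 0 ≤ w := le_trans v.2 hvw
  have hs : HasSubgaussianMGF X ⟨w, hw⟩ P := by
    constructor
    · intro t
      have := integrable_exp_mul_gaussianReal (μ := 0) (v := v) t
      rw [← h] at this
      exact this.comp_measurable hX
    · intro t
      rw [mgf_gaussianReal h]
      apply Real.exp_le_exp.2
      simp only [zero_mul, zero_add]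
      gcongr
      exact hvw
  have := hs.measure_ge_le ha
  rw [← ofReal_measureReal]
  apply ENNReal.ofReal_le_ofReal
  refine le_trans (measureReal_mono ?_) this
  intro ω hω
  simp only [Set.mem_ofPred_eq] at hω ⊢
  exact hω.le

lemma chain_det (f : ℝ → ℝ) (y : ℕ → ℝ) (hy : ∀ n, 0 ≤ y n) (N : ℕ)
    (h : ∀ j : ℕ, ∀ k : ℕ, k < 2 ^ (N + j + 1) →
      |f (((k : ℝ) + 1) / 2 ^ (N + j + 1)) - f ((k : ℝ) / 2 ^ (N + j + 1))| ≤ y j) :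
    ∀ d k : ℕ, k ≤ 2 ^ (N + d) → ∃ i : ℕ, i ≤ 2 ^ N ∧
      |f ((k : ℝ) / 2 ^ (N + d)) - f ((i : ℝ) / 2 ^ N)| ≤ ∑ j ∈ Finset.range d, y j := by
  intro d
  induction d with
  | zero => intro k hk; exact ⟨k, by simpa using hk, by simp⟩
  | succ d ih =>
    intro k hk
    have hp : 2 ^ (N + (d + 1)) = 2 * 2 ^ (N + d) := by ring
    rw [hp] at hk
    obtain ⟨i, hi, hfi⟩ := ih (k / 2) (by omega)
    refine ⟨i, hi, ?_⟩
    rw [Finset.sum_range_succ]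
    have hpt : ((2 * (k / 2) : ℕ) : ℝ) / 2 ^ (N + d + 1) = ((k / 2 : ℕ) : ℝ) / 2 ^ (N + d) := by
      rw [pow_succ]; push_cast; field_simp
    rcases Nat.even_or_odd' k with ⟨c, hc | hc⟩
    · have hkk : k = 2 * (k / 2) := by omega
      have : ((k : ℕ) : ℝ) / 2 ^ (N + (d + 1)) = ((k / 2 : ℕ) : ℝ) / 2 ^ (N + d) := by
        rw [← hpt, ← hkk]; rfl
      rw [this]
      linarith [hy d]
    · have hkk : k = 2 * (k / 2) + 1 := by omega
      have h1 := h d (2 * (k / 2)) (by rw [show N + d + 1 = N + (d + 1) from rfl, hp]; omega)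
      rw [hpt] at h1
      have h2 : ((2 * (k / 2) : ℕ) : ℝ) + 1 = (k : ℝ) := by exact_mod_cast hkk.symm
      rw [h2] at h1
      have := abs_sub_le (f ((k : ℝ) / 2 ^ (N + (d + 1)))) (f (((k / 2 : ℕ) : ℝ) / 2 ^ (N + d)))
        (f ((i : ℝ) / 2 ^ N))
      have h3 : N + d + 1 = N + (d + 1) := rfl
      rw [h3] at h1
      linarith

lemma dyadic_approx (f : ℝ → ℝ) (hf : Continuous f) {u v x : ℝ} (hu : u ∈ Set.Icc (0:ℝ) 1)
    (hv : v ∈ Set.Icc (0:ℝ) 1) (hx : x < f u - f v) (N : ℕ) :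
    ∃ d k l : ℕ, k ≤ 2 ^ (N + d) ∧ l ≤ 2 ^ (N + d) ∧
      x < f ((k : ℝ) / 2 ^ (N + d)) - f ((l : ℝ) / 2 ^ (N + d)) := by
  have hpow : Tendsto (fun d : ℕ => (2 : ℝ) ^ (N + d)) atTop atTop :=
    (tendsto_pow_atTop_atTop_of_one_lt (by norm_num)).comp
      (tendsto_atTop_mono (fun d => Nat.le_add_left d N) tendsto_id)
  have key : ∀ a ∈ Set.Icc (0:ℝ) 1, Tendsto (fun d : ℕ => f ((⌊a * 2 ^ (N + d)⌋₊ : ℝ) / 2 ^ (N + d)))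
      atTop (nhds (f a)) := fun a ha =>
    (hf.tendsto a).comp ((tendsto_nat_floor_mul_div_atTop ha.1).comp hpow)
  obtain ⟨d, hd⟩ := (((key u hu).sub (key v hv)).eventually (lt_mem_nhds hx)).exists
  have hle : ∀ a ∈ Set.Icc (0:ℝ) 1, ⌊a * 2 ^ (N + d)⌋₊ ≤ 2 ^ (N + d) := by
    intro a ha
    apply Nat.floor_le_of_le
    push_cast
    have : (0:ℝ) < 2 ^ (N + d) := by positivity
    nlinarith [ha.2]
  exact ⟨d, _, _, hle u hu, hle v hv, hd⟩

lemma maxLoss_bdd {Ω : Type*} (B : ℝ → Ω → ℝ) (ω : Ω) (hc : Continuous fun t => B t ω) (a : ℝ) :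
    BddAbove {x | ∃ u v : ℝ, 0 ≤ u ∧ u ≤ v ∧ v ≤ a ∧ x = B u ω - B v ω} := by
  obtain ⟨M, hM⟩ := (isCompact_Icc (a := (0:ℝ)) (b := a)).bddAbove_image hc.continuousOn
  obtain ⟨m, hm⟩ := (isCompact_Icc (a := (0:ℝ)) (b := a)).bddBelow_image hc.continuousOn
  refine ⟨M - m, ?_⟩
  rintro x ⟨u, v, h0, huv, hva, rfl⟩
  have h1 := hM ⟨u, ⟨h0, huv.trans hva⟩, rfl⟩
  have h2 := hm ⟨v, ⟨h0.trans huv, hva⟩, rfl⟩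
  simp only at h1 h2
  linarith

lemma maxLoss_lower {Ω : Type*} [MeasurableSpace Ω] {P : Measure Ω}
    [IsProbabilityMeasure P] {H : ℝ} {B : ℝ → Ω → ℝ}
    (hH : 0 < H) (hB : IsFBM P H B) {t : ℝ} (ht : 0 < t) :
    ∃ c : ℝ, 0 < c ∧ ∀ x : ℝ, 0 < x →
      c * exp (-(x + 1) ^ 2 / (2 * t ^ (2 * H))) ≤ (P {ω | x < fbmMaxLoss B t ω}).toReal := by
  obtain ⟨v, hv, hvt⟩ := fbm_incr hH hB le_rfl ht.le
  rw [sub_zero, abs_of_pos ht] at hvt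
  have hv0 : v ≠ 0 := by
    intro h; rw [h] at hvt
    have := Real.rpow_pos_of_pos ht (2 * H)
    simp at hvt; linarith
  have hvp : (0:ℝ) < v := by positivity
  refine ⟨(√(2 * π * v))⁻¹, by positivity, fun x hx => ?_⟩
  have hm : Measurable (fun ω => B 0 ω - B t ω) := (hB.measurable 0).sub (hB.measurable t)
  have hsub : (fun ω => B 0 ω - B t ω) ⁻¹' (Set.Ioc x (x + 1)) ⊆ {ω | x < fbmMaxLoss B t ω} := by
    intro ω hω
    refine lt_of_lt_of_le hω.1 (le_csSup (maxLoss_bdd B ω (hB.cont ω) t) ?_)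
    exact ⟨0, t, le_rfl, ht.le, le_rfl, rfl⟩
  refine le_trans ?_ (ENNReal.toReal_mono (measure_ne_top _ _) (measure_mono hsub))
  rw [← Measure.map_apply hm measurableSet_Ioc, hv, gaussianReal_apply_eq_integral _ hv0,
    ENNReal.toReal_ofReal (integral_nonneg fun _ => gaussianPDFReal_nonneg _ _ _), ← hvt]
  have hc : ∫ y in Set.Ioc x (x + 1), (√(2 * π * v))⁻¹ * exp (-(x + 1) ^ 2 / (2 * v)) =
      (√(2 * π * v))⁻¹ * exp (-(x + 1) ^ 2 / (2 * v)) := by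
    simp
  rw [← hc]
  refine setIntegral_mono_on (integrableOn_const (by simp)) (integrable_gaussianPDFReal _ _).integrableOn
    measurableSet_Ioc ?_
  intro y hy
  rw [gaussianPDFReal]
  have h0 : 0 < y := hx.trans hy.1
  have h1 := hy.2
  simp only [sub_zero]
  gcongr

lemma exists_level (ε : ℝ) (hε : 0 < ε) :
    ∃ N : ℕ, ∀ n ≥ N, (n : ℝ) + 1 ≤ ε ^ 2 / 50 * (32 / 25) ^ n := by
  have h1 : Tendsto (fun n : ℕ => (n : ℝ) ^ 1 / (32 / 25 : ℝ) ^ n) atTop (nhds 0) :=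
    tendsto_pow_const_div_const_pow_of_one_lt 1 (by norm_num)
  have h2 := h1.eventually (gt_mem_nhds (show (0:ℝ) < ε ^ 2 / 100 by positivity))
  obtain ⟨N, hN⟩ := eventually_atTop.1 (h2.and (eventually_ge_atTop 1))
  refine ⟨N, fun n hn => ?_⟩
  obtain ⟨ha, hb⟩ := hN n hn
  rw [div_lt_iff₀ (by positivity), pow_one] at ha
  have : (1:ℝ) ≤ n := by exact_mod_cast hb
  linarith

lemma maxLoss_incl {Ω : Type*} [MeasurableSpace Ω] {P : Measure Ω} {H : ℝ} {B : ℝ → Ω → ℝ}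
    (hB : IsFBM P H B) {t : ℝ} (ht : 0 < t) {ε x : ℝ} (hε : 0 < ε) (hx : 0 < x) (N : ℕ) :
    {ω | x < fbmMaxLoss B t ω} ⊆
      (⋃ i ∈ Finset.range (2 ^ N + 1), ⋃ j ∈ Finset.range (2 ^ N + 1),
        {ω | (1 - ε) * x < B (t * (i / 2 ^ N)) ω - B (t * (j / 2 ^ N)) ω}) ∪
      ⋃ j : ℕ, ⋃ k ∈ Finset.range (2 ^ (N + j + 1)),
        ({ω | ε * x / 10 * (4 / 5) ^ (N + j) <
          B (t * (((k : ℝ) + 1) / 2 ^ (N + j + 1))) ω - B (t * ((k : ℝ) / 2 ^ (N + j + 1))) ω} ∪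
        {ω | ε * x / 10 * (4 / 5) ^ (N + j) <
          B (t * ((k : ℝ) / 2 ^ (N + j + 1))) ω - B (t * (((k : ℝ) + 1) / 2 ^ (N + j + 1))) ω}) := by
  intro ω hω
  by_contra hcon
  simp only [Set.mem_union, Set.mem_iUnion, Set.mem_ofPred_eq, not_or, not_exists, not_lt,
    Finset.mem_range] at hcon
  obtain ⟨hg, hd⟩ := hcon
  have hne : {x | ∃ u v : ℝ, 0 ≤ u ∧ u ≤ v ∧ v ≤ t ∧ x = B u ω - B v ω}.Nonempty :=
    ⟨B 0 ω - B 0 ω, 0, 0, le_rfl, le_rfl, ht.le, rfl⟩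
  have hω' : x < sSup {x | ∃ u v : ℝ, 0 ≤ u ∧ u ≤ v ∧ v ≤ t ∧ x = B u ω - B v ω} := hω
  obtain ⟨z, ⟨u, v, h0, huv, hva, rfl⟩, hz⟩ := exists_lt_of_lt_csSup hne hω'
  set f : ℝ → ℝ := fun s => B (t * s) ω with hf
  have hfc : Continuous f := (hB.cont ω).comp (continuous_const.mul continuous_id)
  have hmem : ∀ a, 0 ≤ a → a ≤ t → a / t ∈ Set.Icc (0:ℝ) 1 := fun a h1 h2 =>
    ⟨by positivity, (div_le_one ht).2 h2⟩
  have hz' : x < f (u / t) - f (v / t) := by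
    simp only [hf, mul_div_cancel₀ _ ht.ne']
    exact hz
  obtain ⟨d, k, l, hk, hl, hkl⟩ := dyadic_approx f hfc (hmem u h0 (huv.trans hva))
    (hmem v (h0.trans huv) hva) hz' N
  have hch := chain_det f (fun j => ε * x / 10 * (4 / 5) ^ (N + j)) (fun n => by positivity) N
    (fun j k hk => by
      rw [abs_sub_le_iff]
      exact hd j k hk) d
  obtain ⟨i, hi, hi2⟩ := hch k hk
  obtain ⟨j, hj, hj2⟩ := hch l hl
  have hsum : ∑ j ∈ Finset.range d, ε * x / 10 * (4 / 5 : ℝ) ^ (N + j) ≤ ε * x / 2 := by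
    rw [← Finset.mul_sum]
    have : ∑ j ∈ Finset.range d, (4 / 5 : ℝ) ^ (N + j) ≤ 5 := by
      calc ∑ j ∈ Finset.range d, (4 / 5 : ℝ) ^ (N + j) ≤ ∑ j ∈ Finset.range d, (4 / 5 : ℝ) ^ j :=
            Finset.sum_le_sum fun j _ =>
              pow_le_pow_of_le_one (by norm_num) (by norm_num) (by omega)
        _ ≤ 5 := by
          rw [geom_sum_eq (by norm_num)]
          have : (0:ℝ) ≤ (4 / 5) ^ d := by positivity
          rw [div_le_iff_of_neg (by norm_num)]
          linarith
    have h3 : 0 ≤ ε * x / 10 := by positivity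
    nlinarith
  have hgr := hg i (by omega) j (by omega)
  rw [abs_le] at hi2 hj2
  simp only [hf] at hi2 hj2 hkl hgr
  linarith [hi2.1, hi2.2, hj2.1, hj2.2]

lemma maxLoss_upper {Ω : Type*} [MeasurableSpace Ω] {P : Measure Ω}
    [IsProbabilityMeasure P] {H : ℝ} {B : ℝ → Ω → ℝ}
    (hH : 1 / 2 ≤ H) (hB : IsFBM P H B) {t : ℝ} (ht : 0 < t) {ε : ℝ} (hε : 0 < ε) (hε1 : ε < 1) :
    ∃ C : ℝ, 0 < C ∧ ∀ x : ℝ, 0 < x → 1 ≤ x ^ 2 / (2 * t ^ (2 * H)) →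
      (P {ω | x < fbmMaxLoss B t ω}).toReal ≤
        C * exp (-((1 - ε) ^ 2 * (x ^ 2 / (2 * t ^ (2 * H))))) := by
  obtain ⟨N, hN⟩ := exists_level ε hε
  have hH0 : 0 < H := by linarith
  have hT : 0 < t ^ (2 * H) := Real.rpow_pos_of_pos ht _
  set T := t ^ (2 * H) with hTdef
  have hsumm : Summable (fun j : ℕ => 4 * (2 * exp (-1)) ^ (N + j)) := by
    have : 2 * exp (-1) < 1 := by
      rw [Real.exp_neg]
      have := Real.exp_one_gt_d9
      rw [← div_eq_mul_inv, div_lt_one (Real.exp_pos _)]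
      linarith
    have h := (summable_geometric_of_lt_one (by positivity) this).mul_left
      (4 * (2 * exp (-1)) ^ N)
    refine h.congr fun j => ?_
    rw [pow_add]; ring
  set S := ∑' j : ℕ, 4 * (2 * exp (-1)) ^ (N + j) with hS
  have hS0 : 0 ≤ S := tsum_nonneg fun j => by positivity
  refine ⟨((2 : ℝ) ^ N + 1) * (2 ^ N + 1) + S, by positivity, fun x hx hq => ?_⟩
  set q := x ^ 2 / (2 * T) with hqdef
  set E := exp (-((1 - ε) ^ 2 * q)) with hE
  have hmeas : ∀ a b, Measurable (fun ω => B a ω - B b ω) := fun a b =>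
    (hB.measurable a).sub (hB.measurable b)
  have tail : ∀ a b w y : ℝ, 0 ≤ a → 0 ≤ b → |b - a| ^ (2 * H) ≤ w → 0 ≤ y →
      P {ω | y < B a ω - B b ω} ≤ ENNReal.ofReal (exp (-y ^ 2 / (2 * w))) := by
    intro a b w y ha hb hw hy
    obtain ⟨v, hv, hv2⟩ := fbm_incr hH0 hB ha hb
    exact gauss_tail (hmeas a b) hv (hv2.trans_le hw) hy
  have hgrid : ∀ i ∈ Finset.range (2 ^ N + 1), ∀ j ∈ Finset.range (2 ^ N + 1),
      P {ω | (1 - ε) * x < B (t * ((i : ℝ) / 2 ^ N)) ω - B (t * ((j : ℝ) / 2 ^ N)) ω}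
        ≤ ENNReal.ofReal E := by
    intro i hi j hj
    have hb : ∀ i ∈ Finset.range (2 ^ N + 1), 0 ≤ t * ((i : ℝ) / 2 ^ N) ∧
        t * ((i : ℝ) / 2 ^ N) ≤ t := by
      intro i hi
      refine ⟨by positivity, ?_⟩
      have h1 : (i : ℝ) ≤ 2 ^ N := by
        have : i ≤ 2 ^ N := by simpa [Nat.lt_succ_iff] using hi
        exact_mod_cast this
      have h2 : (i : ℝ) / 2 ^ N ≤ 1 := (div_le_one (by positivity)).2 h1
      nlinarith
    obtain ⟨hi0, hi1⟩ := hb i hi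
    obtain ⟨hj0, hj1⟩ := hb j hj
    refine (tail _ _ T _ hi0 hj0 ?_ (mul_nonneg (by linarith) hx.le)).trans_eq ?_
    · apply Real.rpow_le_rpow (abs_nonneg _) _ (by linarith)
      rw [abs_le]; constructor <;> linarith
    · rw [hE, hqdef]; congr 2; field_simp
  have hdy : ∀ j k : ℕ, P ({ω | ε * x / 10 * (4 / 5) ^ (N + j) <
          B (t * (((k : ℝ) + 1) / 2 ^ (N + j + 1))) ω - B (t * ((k : ℝ) / 2 ^ (N + j + 1))) ω} ∪
        {ω | ε * x / 10 * (4 / 5) ^ (N + j) <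
          B (t * ((k : ℝ) / 2 ^ (N + j + 1))) ω - B (t * (((k : ℝ) + 1) / 2 ^ (N + j + 1))) ω})
        ≤ ENNReal.ofReal (2 * exp (-((N + j : ℕ) : ℝ)) * E) := by
    intro j k
    set n := N + j with hn
    have hw : (t * (1 / 2 ^ (n + 1))) ^ (2 * H) ≤ T * (1 / 2 ^ (n + 1)) := by
      rw [Real.mul_rpow ht.le (by positivity)]
      gcongr
      have h1 : (1 / 2 ^ (n + 1) : ℝ) ≤ 1 := by
        rw [div_le_one (by positivity)]; exact one_le_pow₀ (by norm_num)
      calc (1 / 2 ^ (n + 1) : ℝ) ^ (2 * H) ≤ (1 / 2 ^ (n + 1) : ℝ) ^ (1 : ℝ) :=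
            Real.rpow_le_rpow_of_exponent_ge (by positivity) h1 (by linarith)
        _ = _ := Real.rpow_one _
    have hd1 : |t * ((k : ℝ) / 2 ^ (n + 1)) - t * (((k : ℝ) + 1) / 2 ^ (n + 1))|
        = t * (1 / 2 ^ (n + 1)) := by
      rw [show t * ((k : ℝ) / 2 ^ (n + 1)) - t * (((k : ℝ) + 1) / 2 ^ (n + 1))
        = -(t * (1 / 2 ^ (n + 1))) by ring, abs_neg, abs_of_nonneg (by positivity)]
    have hexp : exp (-(ε * x / 10 * (4 / 5) ^ n) ^ 2 / (2 * (T * (1 / 2 ^ (n + 1)))))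
        ≤ exp (-(n : ℝ)) * E := by
      rw [hE, ← Real.exp_add]
      apply Real.exp_le_exp.2
      have h1 : -(ε * x / 10 * (4 / 5) ^ n) ^ 2 / (2 * (T * (1 / 2 ^ (n + 1))))
          = -(q * (ε ^ 2 / 50 * (32 / 25) ^ n)) := by
        have h32 : (32 / 25 : ℝ) ^ n = ((4 / 5) ^ n) ^ 2 * 2 ^ n := by
          rw [← pow_mul, mul_comm n 2, pow_mul, ← mul_pow]; norm_num
        rw [h32, hqdef, pow_succ]
        field_simp
        ring
      rw [h1]
      have h2 := hN n (by omega)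
      have h3 : q * ((n : ℝ) + 1) ≤ q * (ε ^ 2 / 50 * (32 / 25) ^ n) :=
        mul_le_mul_of_nonneg_left h2 (by linarith)
      have h4 : (1 - ε) ^ 2 * q ≤ q := by
        have : (1 - ε) ^ 2 ≤ 1 := by nlinarith
        nlinarith
      have h5 : (n : ℝ) ≤ q * n := by
        have : (0:ℝ) ≤ n := Nat.cast_nonneg n
        nlinarith
      linarith
    have ha := tail (t * (((k : ℝ) + 1) / 2 ^ (n + 1))) (t * ((k : ℝ) / 2 ^ (n + 1)))
      (T * (1 / 2 ^ (n + 1))) (ε * x / 10 * (4 / 5) ^ n) (by positivity) (by positivity)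
      (by rw [hd1]; exact hw) (by positivity)
    have hb := tail (t * ((k : ℝ) / 2 ^ (n + 1))) (t * (((k : ℝ) + 1) / 2 ^ (n + 1)))
      (T * (1 / 2 ^ (n + 1))) (ε * x / 10 * (4 / 5) ^ n) (by positivity) (by positivity)
      (by rw [abs_sub_comm, hd1]; exact hw) (by positivity)
    refine (measure_union_le _ _).trans ((add_le_add ha hb).trans ?_)
    rw [← ENNReal.ofReal_add (by positivity) (by positivity)]
    apply ENNReal.ofReal_le_ofReal
    linarith
  have hE0 : 0 ≤ E := (Real.exp_pos _).le
  have hA : P (⋃ i ∈ Finset.range (2 ^ N + 1), ⋃ j ∈ Finset.range (2 ^ N + 1),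
        {ω | (1 - ε) * x < B (t * ((i : ℝ) / 2 ^ N)) ω - B (t * ((j : ℝ) / 2 ^ N)) ω})
      ≤ ENNReal.ofReal (((2 : ℝ) ^ N + 1) * (2 ^ N + 1) * E) := by
    refine (measure_biUnion_finset_le _ _).trans ?_
    refine (Finset.sum_le_sum fun i hi => (measure_biUnion_finset_le _ _).trans
      (Finset.sum_le_sum fun j hj => hgrid i hi j hj)).trans_eq ?_
    simp only [Finset.sum_const, Finset.card_range, nsmul_eq_mul]
    rw [← ENNReal.ofReal_natCast, ← ENNReal.ofReal_mul (by positivity),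
      ← ENNReal.ofReal_mul (by positivity)]
    congr 1; push_cast; ring
  have hC : P (⋃ j : ℕ, ⋃ k ∈ Finset.range (2 ^ (N + j + 1)),
        ({ω | ε * x / 10 * (4 / 5) ^ (N + j) <
          B (t * (((k : ℝ) + 1) / 2 ^ (N + j + 1))) ω - B (t * ((k : ℝ) / 2 ^ (N + j + 1))) ω} ∪
        {ω | ε * x / 10 * (4 / 5) ^ (N + j) <
          B (t * ((k : ℝ) / 2 ^ (N + j + 1))) ω - B (t * (((k : ℝ) + 1) / 2 ^ (N + j + 1))) ω}))
      ≤ ENNReal.ofReal (S * E) := by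
    refine (measure_iUnion_le _).trans ?_
    rw [hS, ← tsum_mul_right, ENNReal.ofReal_tsum_of_nonneg (fun j => by positivity)
      (hsumm.mul_right E)]
    refine ENNReal.tsum_le_tsum fun j => ?_
    refine (measure_biUnion_finset_le _ _).trans
      ((Finset.sum_le_sum fun k _ => hdy j k).trans_eq ?_)
    simp only [Finset.sum_const, Finset.card_range, nsmul_eq_mul]
    rw [← ENNReal.ofReal_natCast, ← ENNReal.ofReal_mul (by positivity)]
    congr 1
    have : exp (-((N + j : ℕ) : ℝ)) = exp (-1) ^ (N + j) := by
      rw [← Real.exp_nat_mul]; congr 1; ring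
    rw [this, mul_pow]
    push_cast
    ring
  apply ENNReal.toReal_le_of_le_ofReal (by positivity)
  refine (measure_mono (maxLoss_incl hB ht hε hx N)).trans ((measure_union_le _ _).trans
    ((add_le_add hA hC).trans_eq ?_))
  rw [← ENNReal.ofReal_add (by positivity) (by positivity)]
  congr 1; ring

theorem maxLoss_log_tail_asymptotic {Ω : Type*} [MeasurableSpace Ω] (P : Measure Ω)
    [IsProbabilityMeasure P] (H : ℝ) (B : ℝ → Ω → ℝ)
    (hH : H ∈ Set.Ico (1/2 : ℝ) 1) (hB : IsFBM P H B) (t : ℝ) (ht : 0 < t) :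
    Tendsto (fun x : ℝ =>
        (1 / x ^ 2) * Real.log ((P {ω | x < fbmMaxLoss B t ω}).toReal))
      atTop (nhds (-(1 / (2 * t ^ (2 * H))))) := by
  have hH1 : 1 / 2 ≤ H := hH.1
  have hH0 : 0 < H := by linarith
  have hT : 0 < t ^ (2 * H) := Real.rpow_pos_of_pos ht _
  obtain ⟨c, hc, hlow⟩ := maxLoss_lower hH0 hB ht
  set T := t ^ (2 * H) with hTdef
  have hinv : Tendsto (fun x : ℝ => 1 / x) atTop (nhds 0) := by
    simpa using tendsto_inv_atTop_zero (𝕜 := ℝ)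
  rw [tendsto_order]
  constructor
  · intro a ha
    have hlim : Tendsto (fun x : ℝ => (1 / x) ^ 2 * Real.log c + -(1 + 1 / x) ^ 2 / (2 * T)) atTop
        (nhds (0 ^ 2 * Real.log c + -(1 + 0) ^ 2 / (2 * T))) :=
      ((hinv.pow 2).mul_const _).add ((((hinv.const_add 1).pow 2).neg).div_const _)
    have hlim2 := hlim.eventually (lt_mem_nhds (show
      a < 0 ^ 2 * Real.log c + -(1 + 0) ^ 2 / (2 * T) by
      refine ha.trans_eq ?_; ring))
    filter_upwards [hlim2, eventually_gt_atTop 0] with x hx hx0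
    refine hx.trans_le ?_
    have h1 := Real.log_le_log (by positivity) (hlow x hx0)
    rw [Real.log_mul hc.ne' (Real.exp_pos _).ne', Real.log_exp] at h1
    have h2 := mul_le_mul_of_nonneg_left h1 (show 0 ≤ 1 / x ^ 2 by positivity)
    refine le_trans (le_of_eq ?_) h2
    field_simp
    try ring
  · intro a ha
    have hcont : Tendsto (fun ε : ℝ => -((1 - ε) ^ 2 * (1 / (2 * T)))) (nhdsWithin 0 (Set.Ioi 0))
        (nhds (-((1 - 0) ^ 2 * (1 / (2 * T))))) := by
      have : Continuous (fun ε : ℝ => -((1 - ε) ^ 2 * (1 / (2 * T)))) := by fun_prop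
      exact (this.tendsto 0).mono_left nhdsWithin_le_nhds
    have hev := hcont.eventually (gt_mem_nhds (show
      -((1 - 0) ^ 2 * (1 / (2 * T))) < a by refine lt_of_eq_of_lt ?_ ha; ring))
    obtain ⟨ε, hεa, hε0, hε1⟩ :=
      (hev.and (Ioo_mem_nhdsGT (show (0:ℝ) < 1 by norm_num))).exists
    obtain ⟨C, hC, hup⟩ := maxLoss_upper hH1 hB ht hε0 hε1
    rw [← hTdef] at hup
    have hlim : Tendsto (fun x : ℝ => (1 / x) ^ 2 * Real.log C + -((1 - ε) ^ 2 * (1 / (2 * T)))) atTop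
        (nhds (0 ^ 2 * Real.log C + -((1 - ε) ^ 2 * (1 / (2 * T))))) :=
      ((hinv.pow 2).mul_const _).add_const _
    have hlim2 := hlim.eventually (gt_mem_nhds (show
      0 ^ 2 * Real.log C + -((1 - ε) ^ 2 * (1 / (2 * T))) < a by
      refine lt_of_eq_of_lt ?_ hεa; ring))
    have hq : ∀ᶠ x : ℝ in atTop, 1 ≤ x ^ 2 / (2 * T) :=
      ((tendsto_pow_atTop (two_ne_zero)).atTop_div_const (by positivity)).eventually_ge_atTop 1
    filter_upwards [hlim2, eventually_gt_atTop 0, hq] with x hx hx0 hxq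
    refine lt_of_le_of_lt ?_ hx
    have h1 := Real.log_le_log (lt_of_lt_of_le (by positivity) (hlow x hx0)) (hup x hx0 hxq)
    rw [Real.log_mul hC.ne' (Real.exp_pos _).ne', Real.log_exp] at h1
    have h2 := mul_le_mul_of_nonneg_left h1 (show 0 ≤ 1 / x ^ 2 by positivity)
    refine le_trans h2 (le_of_eq ?_)
    field_simp
    try ring
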